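/- Let N ≥ 2 be an integer, ℏ > 0 and Λ > 0 real numbers, and u_2,…,u_N ∈ ℂ. Let ψ : ℂ → ℂ be entire and satisfy the difference equation Λ^N (ψ(y+iℏ) + ψ(y−iℏ)) + V_N(y) ψ(y) = (−1)^{N+1} u_N ψ(y) for all y ∈ ℂ, where V_N(y) = y^N + ∑_{k=2}^{N−2} (−1)^k u_k y^{N−k}. Assume: (i) for every α ∈ [−2ℏ, 2ℏ] the function t ↦ ψ(t + iα) belongs to L¹(ℝ), with L¹ norms bounded uniformly in α; (ii) ψ is bounded on the closed strip {|Im y| ≤ 2ℏ}; (iii) |ψ(t + iα)| → 0 as |t| → ∞ uniformly for α ∈ [−2ℏ, 2ℏ]. Then the function φ(x) = (2πℏ)^{−1/2} ∫_ℝ e^{ixy/ℏ} ψ(y) dy is N times continuously differentiable on ℝ and satisfies the oper equation (−iℏ)^N φ^{(N)}(x) + ∑_{k=2}^{N−2} (−1)^k u_k (−iℏ)^{N−k} φ^{(N−k)}(x) + (Λ^N e^{−x} + Λ^N e^{x} + (−1)^N u_N) φ(x) = 0 for every x ∈ ℝ. -/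

import Mathlib

open Finset MeasureTheory

/-!
For `t` real the Baxter equation expresses `V_N(t) ψ(t)` through integrable functions. Comparing
polynomials at infinity, every moment `t ^ n ψ(t)` with `n ≤ N` is then integrable, so `φ` is `C^N`
and multiplication by `t` becomes `-iℏ d/dx`. Since `ψ` decays at the ends of the strip, the line of
integration can be moved by `±iℏ`, which turns `ψ(t ± iℏ)` into `e^{±x} φ`. Applying the inverse
Fourier transform to the Baxter equation on the real line therefore yields the oper equation.
-/

section SemiclassicalFourier

open Complex Filter Topology Asymptotics
open scoped Polynomial FourierTransform

variable {E : Type*} [NormedAddCommGroup E]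

/-- The filter of approaching infinity horizontally inside the closed strip `a ≤ im z ≤ b`. -/
def stripEnds (a b : ℝ) : Filter ℂ :=
  comap (|re ·|) atTop ⊓ 𝓟 (im ⁻¹' Set.Icc a b)

theorem stripEnds_mono {a b a' b' : ℝ} (ha : a' ≤ a) (hb : b ≤ b') :
    stripEnds a b ≤ stripEnds a' b' :=
  inf_le_inf_left _ (principal_mono.2 (Set.preimage_mono (Set.Icc_subset_Icc ha hb)))

theorem stripEnds_hasBasis (a b : ℝ) :
    (stripEnds a b).HasBasis (fun _ : ℝ ↦ True) fun R ↦
      {z | R ≤ |z.re| ∧ z.im ∈ Set.Icc a b} :=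
  (atTop_basis.comap _).inf_principal _

theorem tendsto_stripEnds_of_forall_norm_le {f : ℂ → E} {a b : ℝ}
    (hf : ∀ ε : ℝ, 0 < ε → ∃ R : ℝ, ∀ t : ℝ, R ≤ |t| → ∀ y ∈ Set.Icc a b, ‖f (t + y * I)‖ ≤ ε) :
    Tendsto f (stripEnds a b) (𝓝 0) := by
  refine ((stripEnds_hasBasis a b).tendsto_iff Metric.nhds_basis_closedBall).2 fun ε hε ↦ ?_
  obtain ⟨R, hR⟩ := hf ε hε
  exact ⟨R, trivial, fun z hz ↦ by simpa [re_add_im] using hR z.re hz.1 z.im hz.2⟩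

theorem tendstoUniformlyOn_vertical {f : ℂ → E} {a b : ℝ}
    (hf : Tendsto f (stripEnds a b) (𝓝 0)) {ι : Type*} {l : Filter ι} {x : ι → ℝ}
    (hx : Tendsto (|x ·|) l atTop) :
    TendstoUniformlyOn (fun i (y : ℝ) ↦ f (x i + y * I)) (fun _ ↦ 0) l (Set.Icc a b) := by
  refine tendsto_prod_principal_iff.1 (hf.comp (tendsto_inf.2 ⟨tendsto_comap_iff.2 ?_, ?_⟩))
  · simpa [Function.comp_def] using hx.comp tendsto_fst
  · exact tendsto_principal.2 (eventually_prod_principal_iff.2 (.of_forall fun i y hy ↦ by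
      simpa using hy))

variable [NormedSpace ℂ E]

theorem continuousOn_strip {f : ℂ → E} {a b : ℝ} (hab : a ≠ b)
    (hf : DiffContOnCl ℂ f (im ⁻¹' Set.Ioo a b)) : ContinuousOn f (im ⁻¹' Set.Icc a b) := by
  simpa only [closure_preimage_im, closure_Ioo hab] using hf.continuousOn

theorem tendsto_integral_vertical {f : ℂ → E} {a b : ℝ} (hab : a < b)
    (hd : DiffContOnCl ℂ f (im ⁻¹' Set.Ioo a b)) (hf : Tendsto f (stripEnds a b) (𝓝 0))
    {ι : Type*} {l : Filter ι} [l.IsCountablyGenerated] {x : ι → ℝ}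
    (hx : Tendsto (|x ·|) l atTop) :
    Tendsto (fun i ↦ ∫ y in a..b, f (x i + y * I)) l (𝓝 0) := by
  rw [← intervalIntegral.integral_zero (a := a) (b := b) (μ := volume)]
  refine TendstoUniformlyOn.tendsto_intervalIntegral_of_continuousOn (.of_forall fun i ↦ ?_) ?_
  · rw [Set.uIcc_of_le hab.le]
    exact (continuousOn_strip hab.ne hd).comp (by fun_prop) fun y hy ↦ by simpa using hy
  · rw [Set.uIcc_of_le hab.le]
    exact tendstoUniformlyOn_vertical hf hx

theorem integral_strip_edges_eq {f : ℂ → E} {a b : ℝ} (hab : a < b)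
    (hd : DiffContOnCl ℂ f (im ⁻¹' Set.Ioo a b)) (hf : Tendsto f (stripEnds a b) (𝓝 0))
    (ha : Integrable fun t : ℝ ↦ f (t + a * I)) (hb : Integrable fun t : ℝ ↦ f (t + b * I)) :
    ∫ t : ℝ, f (t + a * I) = ∫ t : ℝ, f (t + b * I) := by
  have rect (T : ℝ) : (∫ t in (-T)..T, f (t + a * I)) - (∫ t in (-T)..T, f (t + b * I))
      = I • (∫ y in a..b, f ((-T : ℝ) + y * I)) - I • ∫ y in a..b, f (T + y * I) := by
    have hc : ContinuousOn f (Set.uIcc (-T) T ×ℂ Set.uIcc a b) :=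
      (continuousOn_strip hab.ne hd).mono fun z hz ↦ by
        simpa only [Set.uIcc_of_le hab.le] using! hz.2
    have hd' : DifferentiableOn ℂ f
        (Set.Ioo (min (-T) T) (max (-T) T) ×ℂ Set.Ioo (min a b) (max a b)) :=
      hd.differentiableOn.mono fun z hz ↦ by
        simpa only [min_eq_left hab.le, max_eq_right hab.le] using! hz.2
    have := integral_boundary_rect_eq_zero_of_continuousOn_of_differentiableOn f ⟨-T, a⟩ ⟨T, b⟩ hc
      hd'
    rwa [add_sub_assoc, add_eq_zero_iff_eq_neg, neg_sub] at this
  have horizontal := (intervalIntegral_tendsto_integral ha tendsto_neg_atTop_atBot tendsto_id).sub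
    (intervalIntegral_tendsto_integral hb tendsto_neg_atTop_atBot tendsto_id)
  have vertical :=
    ((tendsto_integral_vertical hab hd hf (x := fun T : ℝ ↦ -T)
      (by simpa using tendsto_abs_atTop_atTop)).const_smul I).sub
    ((tendsto_integral_vertical hab hd hf tendsto_abs_atTop_atTop).const_smul I)
  rw [smul_zero, sub_zero] at vertical
  exact sub_eq_zero.1 (tendsto_nhds_unique horizontal (vertical.congr fun T ↦ (rect T).symm))

theorem integral_horizontal_eq {f : ℂ → E} {a b y₁ y₂ : ℝ}
    (hd : DiffContOnCl ℂ f (im ⁻¹' Set.Ioo a b)) (hf : Tendsto f (stripEnds a b) (𝓝 0))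
    (hy₁ : y₁ ∈ Set.Icc a b) (hy₂ : y₂ ∈ Set.Icc a b)
    (hint₁ : Integrable fun t : ℝ ↦ f (t + y₁ * I))
    (hint₂ : Integrable fun t : ℝ ↦ f (t + y₂ * I)) :
    ∫ t : ℝ, f (t + y₁ * I) = ∫ t : ℝ, f (t + y₂ * I) := by
  wlog hlt : y₁ < y₂ generalizing y₁ y₂
  · rcases (not_lt.1 hlt).eq_or_lt with rfl | hgt
    · rfl
    · exact (this hy₂ hy₁ hint₂ hint₁ hgt).symm
  exact integral_strip_edges_eq hlt
    (hd.mono (Set.preimage_mono (Set.Ioo_subset_Ioo hy₁.1 hy₂.2)))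
    (hf.mono_left (stripEnds_mono hy₁.1 hy₂.2)) hint₁ hint₂

theorem integrable_eval_smul_of_degree_le {P Q : ℂ[X]} {f : ℝ → E} (hf : LocallyIntegrable f)
    (hP : Integrable fun t : ℝ ↦ P.eval (t : ℂ) • f t) (hQP : Q.degree ≤ P.degree) :
    Integrable fun t : ℝ ↦ Q.eval (t : ℂ) • f t := by
  have hloc : LocallyIntegrable fun t : ℝ ↦ Q.eval (t : ℂ) • f t :=
    hf.continuous_smul (by fun_prop)
  have hreal : Tendsto ((↑) : ℝ → ℂ) (cocompact ℝ) (Bornology.cobounded ℂ) := by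
    rw [Metric.cobounded_eq_cocompact]
    exact isometry_ofReal.isClosedEmbedding.tendsto_cocompact
  refine hloc.integrable_of_isBigO_cocompact ?_ (hP.integrableAtFilter _)
  exact ((Polynomial.isBigO_cobounded_of_degree_le hQP).comp_tendsto hreal).smul (isBigO_refl f _)

theorem integrable_pow_smul_of_le_natDegree {P : ℂ[X]} {f : ℝ → E} (hf : Integrable f)
    (hP : Integrable fun t : ℝ ↦ P.eval (t : ℂ) • f t) {n : ℕ} (hn : n ≤ P.natDegree) :
    Integrable fun t : ℝ ↦ (t : ℂ) ^ n • f t := by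
  rcases eq_or_ne P 0 with rfl | hP0
  · obtain rfl : n = 0 := by simpa using hn
    simpa using hf
  · simpa using integrable_eval_smul_of_degree_le (Q := .X ^ n) hf.locallyIntegrable hP
      (by simpa [Polynomial.degree_eq_natDegree hP0] using hn)

/-- The inverse Fourier transform with Planck constant `h`, normalised so that it is unitary on
`L²`; the momentum `t` then corresponds to the operator `-i h d/dx`. -/
noncomputable def semiclassicalFourierInv (h : ℝ) (f : ℝ → E) (x : ℝ) : E :=
  (√(2 * Real.pi * h))⁻¹ • ∫ t : ℝ, exp (I * x * t / h) • f t

variable {h : ℝ} {f g : ℝ → E} {x : ℝ}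

theorem norm_semiclassicalKernel (h x t : ℝ) : ‖exp (I * x * t / h)‖ = 1 := by
  simpa [mul_assoc, mul_div_assoc] using norm_exp_I_mul_ofReal (x * t / h)

theorem integrable_semiclassicalKernel_smul (h x : ℝ) (hf : Integrable f) :
    Integrable fun t : ℝ ↦ exp (I * x * t / h) • f t :=
  hf.bdd_smul 1 (by fun_prop) (.of_forall fun t ↦ (norm_semiclassicalKernel h x t).le)

theorem semiclassicalFourierInv_add (hf : Integrable f) (hg : Integrable g) :
    semiclassicalFourierInv h (fun t ↦ f t + g t) x =
      semiclassicalFourierInv h f x + semiclassicalFourierInv h g x := by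
  simp only [semiclassicalFourierInv, smul_add]
  rw [integral_add (integrable_semiclassicalKernel_smul h x hf)
    (integrable_semiclassicalKernel_smul h x hg), smul_add]

theorem semiclassicalFourierInv_sum {ι : Type*} {s : Finset ι} {F : ι → ℝ → E}
    (hF : ∀ i ∈ s, Integrable (F i)) :
    semiclassicalFourierInv h (fun t ↦ ∑ i ∈ s, F i t) x =
      ∑ i ∈ s, semiclassicalFourierInv h (F i) x := by
  simp only [semiclassicalFourierInv, smul_sum]
  rw [integral_finsetSum s fun i hi ↦ integrable_semiclassicalKernel_smul h x (hF i hi), smul_sum]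

theorem semiclassicalFourierInv_const_smul (c : ℂ) :
    semiclassicalFourierInv h (fun t ↦ c • f t) x = c • semiclassicalFourierInv h f x := by
  simp only [semiclassicalFourierInv, smul_comm _ c, integral_smul]

theorem semiclassicalFourierInv_eq_fourier (h : ℝ) (f : ℝ → E) :
    semiclassicalFourierInv h f =
      fun x ↦ (√(2 * Real.pi * h))⁻¹ • 𝓕 f (-(2 * Real.pi * h)⁻¹ * x) := by
  ext x
  rw [semiclassicalFourierInv, Real.fourier_real_eq_integral_exp_smul]
  congr! 5 with t
  push_cast
  field_simp

theorem contDiff_fourier_of_integrable_pow_smul {n : ℕ}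
    (hf : ∀ k ≤ n, Integrable fun t : ℝ ↦ (t : ℂ) ^ k • f t) : ContDiff ℝ n (𝓕 f) :=
  Real.contDiff_fourier fun k hk ↦ by
    simpa [norm_smul] using (hf k (by exact_mod_cast hk)).norm

theorem contDiff_semiclassicalFourierInv {n : ℕ}
    (hf : ∀ k ≤ n, Integrable fun t : ℝ ↦ (t : ℂ) ^ k • f t) :
    ContDiff ℝ n (semiclassicalFourierInv h f) := by
  rw [semiclassicalFourierInv_eq_fourier]
  exact ((contDiff_fourier_of_integrable_pow_smul hf).comp
    (contDiff_const.mul contDiff_id)).const_smul _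

theorem iteratedDeriv_semiclassicalFourierInv (hh : h ≠ 0) {n : ℕ}
    (hf : ∀ k ≤ n, Integrable fun t : ℝ ↦ (t : ℂ) ^ k • f t) (x : ℝ) :
    (-I * h) ^ n • iteratedDeriv n (semiclassicalFourierInv h f) x =
      semiclassicalFourierInv h (fun t ↦ (t : ℂ) ^ n • f t) x := by
  have hscale : -I * h * -(2 * Real.pi * h : ℂ)⁻¹ * (-2 * Real.pi * I) = 1 := by
    have : (h : ℂ) ≠ 0 := ofReal_ne_zero.2 hh
    field_simp
    rw [I_sq, neg_neg]
  have hderiv : iteratedDeriv n (semiclassicalFourierInv h f) x =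
      (-(2 * Real.pi * h : ℂ)⁻¹) ^ n •
        semiclassicalFourierInv h (fun t ↦ (-2 * Real.pi * I * t) ^ n • f t) x := by
    have hf' (k : ℕ) (hk : (k : ℕ∞) ≤ n) : Integrable fun t : ℝ ↦ t ^ k • f t := by
      simpa [← Complex.coe_smul] using hf k (by exact_mod_cast hk)
    simp only [semiclassicalFourierInv_eq_fourier, iteratedDeriv_fun_const_smul_field]
    rw [iteratedDeriv_comp_const_smul (contDiff_fourier_of_integrable_pow_smul hf),
      Real.iteratedDeriv_fourier hf' le_rfl, smul_comm, ← Complex.coe_smul (_ ^ n)]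
    push_cast
    rfl
  have hfactor : (fun t : ℝ ↦ (-2 * Real.pi * I * t) ^ n • f t) =
      fun t : ℝ ↦ (-2 * Real.pi * I) ^ n • (t : ℂ) ^ n • f t := by
    funext t
    rw [mul_pow, mul_smul]
  rw [hderiv, hfactor, semiclassicalFourierInv_const_smul, smul_smul, smul_smul, ← mul_pow,
    ← mul_pow, hscale, one_pow, one_smul]

/-- The value at `x` of `P (-i h d/dx) φ`, as a linear map in the polynomial `P`. -/
noncomputable def momentumOperator (h : ℝ) (φ : ℝ → E) (x : ℝ) : ℂ[X] →ₗ[ℂ] E :=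
  Polynomial.lsum fun n ↦ LinearMap.toSpanSingleton ℂ E ((-I * h) ^ n • iteratedDeriv n φ x)

theorem momentumOperator_C_mul_X_pow (φ : ℝ → E) (c : ℂ) (n : ℕ) :
    momentumOperator h φ x (.C c * .X ^ n) = c • (-I * h) ^ n • iteratedDeriv n φ x := by
  simp [momentumOperator, Polynomial.lsum_apply, Polynomial.C_mul_X_pow_eq_monomial,
    Polynomial.sum_monomial_index]

theorem momentumOperator_semiclassicalFourierInv (hh : h ≠ 0) {P : ℂ[X]}
    (hf : ∀ k ≤ P.natDegree, Integrable fun t : ℝ ↦ (t : ℂ) ^ k • f t) (x : ℝ) :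
    momentumOperator h (semiclassicalFourierInv h f) x P =
      semiclassicalFourierInv h (fun t ↦ P.eval (t : ℂ) • f t) x := by
  have hle {n : ℕ} (hn : n ∈ P.support) : n ≤ P.natDegree :=
    Polynomial.le_natDegree_of_mem_supp n hn
  have hint (n : ℕ) (hn : n ∈ P.support) :
      Integrable fun t : ℝ ↦ P.coeff n • (t : ℂ) ^ n • f t := (hf n (hle hn)).smul (P.coeff n)
  simp only [Polynomial.eval_eq_sum, Polynomial.sum_def, sum_smul, mul_smul]
  rw [semiclassicalFourierInv_sum hint]
  simp only [momentumOperator, Polynomial.lsum_apply, Polynomial.sum_def,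
    LinearMap.toSpanSingleton_apply, semiclassicalFourierInv_const_smul]
  refine sum_congr rfl fun n hn ↦ ?_
  rw [iteratedDeriv_semiclassicalFourierInv hh fun k hk ↦ hf k (hk.trans (hle hn))]

theorem semiclassicalKernel_horizontal (h x t s : ℝ) :
    exp (I * x * (t + s * I) / h) = exp (-(x * s / h)) * exp (I * x * t / h) := by
  rw [← exp_add]
  congr 1
  linear_combination (x * s / h : ℂ) * I_mul_I

theorem tendsto_semiclassicalKernel_smul {F : ℂ → E} {a b : ℝ}
    (hF : Tendsto F (stripEnds a b) (𝓝 0)) (h x : ℝ) :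
    Tendsto (fun z ↦ exp (I * x * z / h) • F z) (stripEnds a b) (𝓝 0) := by
  have hnorm (z : ℂ) : ‖exp (I * x * z / h)‖ = Real.exp (-(x / h) * z.im) := by
    have hre : (I * x * z / h).re = -(x / h) * z.im := by
      have : I * x * z / h = I * ((x / h : ℝ) * z) := by push_cast; ring
      rw [this, I_mul_re, im_ofReal_mul, neg_mul]
    rw [norm_exp, hre]
  obtain ⟨C, hC⟩ := (isCompact_Icc (a := a) (b := b)).bddAbove_image
    (f := fun y ↦ Real.exp (-(x / h) * y)) (by fun_prop)
  have hbdd : IsBoundedUnder (· ≤ ·) (stripEnds a b) (norm ∘ fun z : ℂ ↦ exp (I * x * z / h)) := by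
    refine ⟨C, eventually_map.2 (Eventually.filter_mono inf_le_right ?_)⟩
    exact eventually_principal.2 fun z hz ↦ (hnorm z).trans_le (hC ⟨z.im, hz, rfl⟩)
  exact hbdd.smul_tendsto_zero hF

theorem semiclassicalFourierInv_add_mul_I {F : ℂ → E} {a b s : ℝ}
    (hd : DiffContOnCl ℂ F (im ⁻¹' Set.Ioo a b)) (hF : Tendsto F (stripEnds a b) (𝓝 0))
    (h0 : 0 ∈ Set.Icc a b) (hs : s ∈ Set.Icc a b)
    (hint : Integrable fun t : ℝ ↦ F t) (hint_s : Integrable fun t : ℝ ↦ F (t + s * I)) :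
    semiclassicalFourierInv h (fun t ↦ F (t + s * I)) x =
      exp (x * s / h) • semiclassicalFourierInv h (fun t ↦ F t) x := by
  have kernel_line (t : ℝ) : exp (I * x * (t + s * I) / h) • F (t + s * I) =
      exp (-(x * s / h)) • exp (I * x * t / h) • F (t + s * I) := by
    rw [semiclassicalKernel_horizontal, mul_smul]
  have hdiff : DiffContOnCl ℂ (fun z ↦ exp (I * x * z / h) • F z) (im ⁻¹' Set.Ioo a b) :=
    Differentiable.diffContOnCl (by fun_prop) |>.smul hd
  have shift := integral_horizontal_eq hdiff (tendsto_semiclassicalKernel_smul hF h x) h0 hs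
    (by simpa using integrable_semiclassicalKernel_smul h x hint)
    (by simpa only [kernel_line] using! (integrable_semiclassicalKernel_smul h x hint_s).smul _)
  simp only [ofReal_zero, zero_mul, add_zero, kernel_line, integral_smul] at shift
  rw [semiclassicalFourierInv, semiclassicalFourierInv, shift, smul_comm (exp _), smul_smul,
    ← exp_add, add_neg_cancel, exp_zero, one_smul]

theorem inverse_fourier_of_baxter_solution_satisfies_oper_general [CompleteSpace E]
    (hh : 0 < h) {a b : ℂ} {P : ℂ[X]} {ψ : ℂ → E}
    (hd : DiffContOnCl ℂ ψ (im ⁻¹' Set.Ioo (-h) h)) (hdecay : Tendsto ψ (stripEnds (-h) h) (𝓝 0))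
    (hint : Integrable fun t : ℝ ↦ ψ t)
    (hint_up : Integrable fun t : ℝ ↦ ψ (t + h * I))
    (hint_down : Integrable fun t : ℝ ↦ ψ (t - h * I))
    (hbax : ∀ t : ℝ, a • ψ (t + h * I) + b • ψ (t - h * I) + P.eval (t : ℂ) • ψ t = 0) :
    ContDiff ℝ P.natDegree (semiclassicalFourierInv h fun t ↦ ψ t) ∧
    ∀ x : ℝ, (a * exp x + b * exp (-x)) • semiclassicalFourierInv h (fun t ↦ ψ t) x +
      momentumOperator h (semiclassicalFourierInv h fun t ↦ ψ t) x P = 0 := by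
  have hint_shifts : Integrable fun t : ℝ ↦ a • ψ (t + h * I) + b • ψ (t - h * I) :=
    (hint_up.smul a).add (hint_down.smul b)
  have hint_eval : Integrable fun t : ℝ ↦ P.eval (t : ℂ) • ψ t :=
    hint_shifts.neg.congr (.of_forall fun t ↦ (eq_neg_of_add_eq_zero_right (hbax t)).symm)
  have moments (n : ℕ) (hn : n ≤ P.natDegree) : Integrable fun t : ℝ ↦ (t : ℂ) ^ n • ψ t :=
    integrable_pow_smul_of_le_natDegree hint hint_eval hn
  refine ⟨contDiff_semiclassicalFourierInv moments, fun x ↦ ?_⟩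
  have hh_cast : (h : ℂ) ≠ 0 := ofReal_ne_zero.2 hh.ne'
  have up : semiclassicalFourierInv h (fun t ↦ ψ (t + h * I)) x =
      exp x • semiclassicalFourierInv h (fun t ↦ ψ t) x := by
    simpa [hh_cast] using semiclassicalFourierInv_add_mul_I (h := h) (x := x) (s := h) hd hdecay
      (by simpa using hh.le) (by simpa using hh.le) hint hint_up
  have down : semiclassicalFourierInv h (fun t ↦ ψ (t - h * I)) x =
      exp (-x) • semiclassicalFourierInv h (fun t ↦ ψ t) x := by
    simpa [hh_cast, neg_div, ← sub_eq_add_neg] using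
      semiclassicalFourierInv_add_mul_I (h := h) (x := x) (s := -h) hd hdecay
        (by simpa using hh.le) (by simpa using hh.le) hint
        (by simpa [← sub_eq_add_neg] using hint_down)
  calc (a * exp x + b * exp (-x)) • semiclassicalFourierInv h (fun t ↦ ψ t) x +
        momentumOperator h (semiclassicalFourierInv h fun t ↦ ψ t) x P
    _ = semiclassicalFourierInv h (fun t ↦ a • ψ (t + h * I) + b • ψ (t - h * I)) x +
        semiclassicalFourierInv h (fun t ↦ P.eval (t : ℂ) • ψ t) x := by
      rw [momentumOperator_semiclassicalFourierInv hh.ne' moments,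
        semiclassicalFourierInv_add (f := fun t ↦ a • ψ (t + h * I))
          (g := fun t ↦ b • ψ (t - h * I)) (hint_up.smul a) (hint_down.smul b),
        semiclassicalFourierInv_const_smul, semiclassicalFourierInv_const_smul, up, down,
        add_smul, mul_smul, mul_smul]
    _ = semiclassicalFourierInv h (fun _ ↦ 0) x := by
      simp only [← semiclassicalFourierInv_add hint_shifts hint_eval, hbax]
    _ = 0 := by simp [semiclassicalFourierInv]

/-- The symbol `t ^ N + ∑ (-1) ^ k * u k * t ^ (N - k) + (-1) ^ N * u N` of the oper, that is
`V_N` together with the spectral parameter `u N`. -/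
noncomputable def operSymbol (N : ℕ) (u : ℕ → ℂ) : ℂ[X] :=
  .X ^ N + ∑ k ∈ Finset.Icc 2 (N - 2), .C ((-1) ^ k * u k) * .X ^ (N - k) + .C ((-1) ^ N * u N)

theorem natDegree_operSymbol {N : ℕ} (hN : N ≠ 0) (u : ℕ → ℂ) :
    (operSymbol N u).natDegree = N := by
  have hsum : (∑ k ∈ Finset.Icc 2 (N - 2),
      (.C ((-1) ^ k * u k) * .X ^ (N - k) : ℂ[X])).natDegree < N := by
    refine (Polynomial.natDegree_sum_le_of_forall_le (n := N - 1) _ _ fun k hk ↦ ?_).trans_lt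
      (by lia)
    exact (Polynomial.natDegree_C_mul_X_pow_le _ _).trans (by grind)
  rw [operSymbol, Polynomial.natDegree_add_C, Polynomial.natDegree_add_eq_left_of_natDegree_lt
    (by rwa [Polynomial.natDegree_X_pow]), Polynomial.natDegree_X_pow]

theorem eval_operSymbol (N : ℕ) (u : ℕ → ℂ) (z : ℂ) :
    (operSymbol N u).eval z = z ^ N +
      ∑ k ∈ Finset.Icc 2 (N - 2), (-1) ^ k * u k * z ^ (N - k) + (-1) ^ N * u N := by
  simp [operSymbol, Polynomial.eval_finsetSum]

theorem momentumOperator_operSymbol (φ : ℝ → ℂ) (N : ℕ) (u : ℕ → ℂ) :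
    momentumOperator h φ x (operSymbol N u) = (-I * h) ^ N * iteratedDeriv N φ x +
      ∑ k ∈ Finset.Icc 2 (N - 2),
        (-1) ^ k * u k * (-I * h) ^ (N - k) * iteratedDeriv (N - k) φ x +
      (-1) ^ N * u N * φ x := by
  have hX := momentumOperator_C_mul_X_pow (h := h) (x := x) φ 1 N
  have hC := momentumOperator_C_mul_X_pow (h := h) (x := x) φ ((-1) ^ N * u N) 0
  rw [Polynomial.C_1, one_mul, one_smul] at hX
  rw [pow_zero, mul_one, pow_zero, one_smul, iteratedDeriv_zero] at hC
  simp only [operSymbol, map_add, map_sum, hX, hC, momentumOperator_C_mul_X_pow, smul_eq_mul,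
    mul_assoc]

end SemiclassicalFourier

/-- if ψ is entire, solves the Baxter-type difference equation, is in L¹
on every horizontal line in the strip |Im y| ≤ 2ℏ with uniformly bounded L¹ norms, is
bounded on that strip, and decays at horizontal infinity uniformly in the strip, then
φ(x) = (2πℏ)^{-1/2} ∫_ℝ e^{ixy/ℏ} ψ(y) dy is N times continuously differentiable on ℝ
and satisfies the oper equation. -/
theorem inverse_fourier_of_baxter_solution_satisfies_oper
    (N : ℕ) (hN : 2 ≤ N) (hbar Lam : ℝ) (hhbar : 0 < hbar) (hLam : 0 < Lam)
    (u : ℕ → ℂ) (ψ : ℂ → ℂ) (hent : Differentiable ℂ ψ)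
    (hbax : ∀ y : ℂ,
      (Lam : ℂ) ^ N * (ψ (y + Complex.I * hbar) + ψ (y - Complex.I * hbar))
        + (y ^ N + ∑ k ∈ Finset.Icc 2 (N - 2), (-1 : ℂ) ^ k * u k * y ^ (N - k)) * ψ y
        = (-1 : ℂ) ^ (N + 1) * u N * ψ y)
    (B : ℝ)
    (hL1 : ∀ α : ℝ, |α| ≤ 2 * hbar →
      Integrable (fun t : ℝ => ψ (t + α * Complex.I)) ∧
      (∫ t : ℝ, ‖ψ (t + α * Complex.I)‖) ≤ B)
    (B' : ℝ) (hbdd : ∀ y : ℂ, |y.im| ≤ 2 * hbar → ‖ψ y‖ ≤ B')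
    (hdecay : ∀ ε : ℝ, 0 < ε → ∃ R : ℝ, ∀ t : ℝ, R ≤ |t| →
      ∀ α : ℝ, |α| ≤ 2 * hbar → ‖ψ (t + α * Complex.I)‖ ≤ ε)
    (φ : ℝ → ℂ)
    (hφ : ∀ x : ℝ, φ x = (Real.sqrt (2 * Real.pi * hbar))⁻¹ *
        ∫ t : ℝ, Complex.exp (Complex.I * x * t / hbar) * ψ t) :
    ContDiff ℝ (N : ℕ∞) φ ∧
    ∀ x : ℝ,
      (-Complex.I * hbar) ^ N * iteratedDeriv N φ x
        + (∑ k ∈ Finset.Icc 2 (N - 2),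
            (-1 : ℂ) ^ k * u k * (-Complex.I * hbar) ^ (N - k) * iteratedDeriv (N - k) φ x)
        + ((Lam : ℂ) ^ N * Complex.exp (-(x : ℂ)) + (Lam : ℂ) ^ N * Complex.exp (x : ℂ)
            + (-1 : ℂ) ^ N * u N) * φ x = 0 := by
  have hstrip {s : ℝ} (hs : |s| ≤ hbar) : |s| ≤ 2 * hbar := by linarith
  have hline {s : ℝ} (hs : |s| ≤ hbar) := (hL1 s (hstrip hs)).1
  have hdecay_strip : Filter.Tendsto ψ (stripEnds (-hbar) hbar) (nhds 0) :=
    tendsto_stripEnds_of_forall_norm_le fun ε hε ↦ (hdecay ε hε).imp fun _ hR t ht y hy ↦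
      hR t ht y (hstrip (abs_le.2 hy))
  obtain rfl : φ = semiclassicalFourierInv hbar fun t ↦ ψ t :=
    funext fun x ↦ by simp [hφ, semiclassicalFourierInv]
  have hsymbol (t : ℝ) : (Lam : ℂ) ^ N • ψ (t + hbar * Complex.I) +
      (Lam : ℂ) ^ N • ψ (t - hbar * Complex.I) + (operSymbol N u).eval (t : ℂ) • ψ t = 0 := by
    rw [eval_operSymbol, mul_comm (hbar : ℂ)]
    simp only [smul_eq_mul]
    linear_combination hbax t
  obtain ⟨hsmooth, hoper⟩ := inverse_fourier_of_baxter_solution_satisfies_oper_general hhbar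
    hent.diffContOnCl hdecay_strip (by simpa using hline (s := 0) (by simpa using hhbar.le))
    (hline (abs_of_pos hhbar).le)
    (by simpa [← sub_eq_add_neg] using hline (s := -hbar) (by simp [abs_of_pos hhbar])) hsymbol
  rw [natDegree_operSymbol (by lia)] at hsmooth
  refine ⟨hsmooth, fun x ↦ ?_⟩
  have := hoper x
  rw [momentumOperator_operSymbol, smul_eq_mul] at this
  linear_combination this
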